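/- arXiv:1101.0201 — 7 statements merged into one kernel-verified Lean document; each statement's English description precedes it below -/
import Mathlib

section
/- Let L be a bialgebra over a field k, let C be a k-coalgebra equipped with a left L-module structure, and let π : L → C be a surjective k-linear map which is a coalgebra homomorphism and is left L-linear in the sense that π(x*y) = x • π(y) for all x, y ∈ L (L acting on itself by left multiplication). Define D := {d ∈ L | (π ⊗ id)(Δ_L(d)) = π(1) ⊗ d}. Then D is a unital subalgebra of L (it contains 1 and is closed under multiplication and scalar multiples), and for every d ∈ D the element Δ_L(d) ∈ L ⊗ L lies in the image of D ⊗ L in L ⊗ L; that is, D is a right L-comodule subalgebra of L. -/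
open TensorProduct

/-- The set `D = {d ∈ L | (π ⊗ id)(Δ d) = π 1 ⊗ d}` of left coaction invariants of `L`
for the left `C`-coaction `(π ⊗ id) ∘ Δ` induced by a coalgebra map `π : L → C`. -/
def coactionInvariants {k L C : Type*} [Field k] [Ring L] [Bialgebra k L]
    [AddCommGroup C] [Module k C] [Coalgebra k C] (π : L →ₗc[k] C) : Set L :=
  {d : L | TensorProduct.map π.toLinearMap LinearMap.id
      (Coalgebra.comul (R := k) d) = π 1 ⊗ₜ[k] d}

/-- Let `L` be a bialgebra over a field `k`, `C` a `k`-coalgebra with a left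
`L`-module structure, and `π : L → C` a surjective `k`-linear coalgebra homomorphism which
is left `L`-linear in the sense that `π (x * y) = x • π y`.  Let
`D = {d ∈ L | (π ⊗ id)(Δ d) = π 1 ⊗ d}`.  Then `D` is a unital subalgebra of `L`
(it contains `1` and is closed under addition, multiplication and scalar multiples), and
for every `d ∈ D` the element `Δ d ∈ L ⊗ L` lies in the image of `D ⊗ L` in `L ⊗ L`;
that is, `D` is a right `L`-comodule subalgebra of `L`. -/
theorem stmt6 {k L C : Type*} [Field k] [Ring L] [Bialgebra k L]
    [AddCommGroup C] [Module k C] [Coalgebra k C] [Module L C]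
    (π : L →ₗc[k] C) (hsurj : Function.Surjective π)
    (hlin : ∀ x y : L, π (x * y) = x • π y) :
    (1 : L) ∈ coactionInvariants π ∧
    (∀ a ∈ coactionInvariants π, ∀ b ∈ coactionInvariants π,
      a + b ∈ coactionInvariants π ∧ a * b ∈ coactionInvariants π) ∧
    (∀ (c : k), ∀ a ∈ coactionInvariants π, c • a ∈ coactionInvariants π) ∧
    (∀ d ∈ coactionInvariants π,
      Coalgebra.comul (R := k) d ∈ Submodule.span k
        {t : L ⊗[k] L | ∃ a ∈ coactionInvariants π, ∃ y : L, t = a ⊗ₜ[k] y}) := by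
  have mem : ∀ d : L, d ∈ coactionInvariants π ↔ TensorProduct.map π.toLinearMap LinearMap.id
      (Coalgebra.comul (R := k) d) = π 1 ⊗ₜ[k] d := fun d => Iff.rfl
  have key : ∀ X Y Y' : L ⊗[k] L,
      TensorProduct.map π.toLinearMap LinearMap.id Y =
        TensorProduct.map π.toLinearMap LinearMap.id Y' →
      TensorProduct.map π.toLinearMap LinearMap.id (X * Y) =
        TensorProduct.map π.toLinearMap LinearMap.id (X * Y') := by
    intro X Y Y' h
    induction X using TensorProduct.induction_on with
    | zero => simp
    | add X₁ X₂ h₁ h₂ => rw [add_mul, add_mul, map_add, map_add, h₁, h₂]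
    | tmul x y =>
      let φ : C →ₗ[k] C :=
        { toFun := fun c => x • c
          map_add' := smul_add x
          map_smul' := by
            intro r c
            obtain ⟨z, rfl⟩ := hsurj c
            rw [← map_smul, ← hlin, ← hlin, mul_smul_comm, map_smul]
            rfl }
      have hφ : ∀ Z : L ⊗[k] L, TensorProduct.map π.toLinearMap LinearMap.id ((x ⊗ₜ[k] y) * Z) =
          TensorProduct.map φ (LinearMap.mulLeft k y)
            (TensorProduct.map π.toLinearMap LinearMap.id Z) := by
        intro Z
        induction Z using TensorProduct.induction_on with
        | zero => simp
        | add X₁ X₂ h₁ h₂ => rw [mul_add, map_add, map_add, map_add, h₁, h₂]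
        | tmul a b =>
          have := hlin x a
          simp only [Algebra.TensorProduct.tmul_mul_tmul, TensorProduct.map_tmul,
            LinearMap.id_apply, LinearMap.mulLeft_apply]
          congr 1
      rw [hφ, hφ, h]
  have key2 : ∀ (X : L ⊗[k] L) (b : L),
      TensorProduct.map π.toLinearMap LinearMap.id (X * (1 ⊗ₜ[k] b)) =
        TensorProduct.map LinearMap.id (LinearMap.mulRight k b)
          (TensorProduct.map π.toLinearMap LinearMap.id X) := by
    intro X b
    induction X using TensorProduct.induction_on with
    | zero => simp
    | add X₁ X₂ h₁ h₂ => rw [add_mul, map_add, map_add, map_add, h₁, h₂]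
    | tmul x y => simp
  refine ⟨?_, ?_, ?_, ?_⟩
  · rw [mem, Bialgebra.comul_one, Algebra.TensorProduct.one_def]
    rfl
  · intro a ha b hb
    rw [mem] at ha hb
    constructor
    · rw [mem, map_add, map_add, ha, hb, TensorProduct.tmul_add]
    · rw [mem, Bialgebra.comul_mul, key _ _ (1 ⊗ₜ[k] b) (by rw [hb]; rfl), key2, ha]
      simp
  · intro c a ha
    rw [mem] at ha
    rw [mem, map_smul, map_smul, ha, TensorProduct.tmul_smul]
  · intro d hd
    let f : L →ₗ[k] C ⊗[k] L :=
      (TensorProduct.map π.toLinearMap LinearMap.id) ∘ₗ Coalgebra.comul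
        - TensorProduct.mk k C L (π 1)
    have hf : ∀ x, f x = 0 ↔ x ∈ coactionInvariants π := by
      intro x
      rw [mem]
      exact sub_eq_zero
    have hex : Function.Exact (LinearMap.ker f).subtype f := LinearMap.exact_subtype_ker_map f
    have hex2 := Module.Flat.rTensor_exact L hex
    have h0 : f.rTensor L (Coalgebra.comul (R := k) d) = 0 := by
      have h1 : ∀ Z : L ⊗[k] L, TensorProduct.assoc k C L L (f.rTensor L Z) =
          TensorProduct.map π.toLinearMap LinearMap.id
            (TensorProduct.assoc k L L L ((Coalgebra.comul (R := k)).rTensor L Z))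
          - π 1 ⊗ₜ[k] Z := by
        intro Z
        induction Z using TensorProduct.induction_on with
        | zero => simp
        | add X₁ X₂ h₁ h₂ =>
          simp only [map_add, h₁, h₂, TensorProduct.tmul_add]
          abel
        | tmul x y =>
          simp only [LinearMap.rTensor_tmul, f, LinearMap.sub_apply, TensorProduct.sub_tmul,
            map_sub, LinearMap.comp_apply, TensorProduct.mk_apply, TensorProduct.assoc_tmul]
          congr 1
          generalize (Coalgebra.comul (R := k) x) = W
          induction W using TensorProduct.induction_on with
          | zero => simp
          | add X₁ X₂ h₁ h₂ => simp only [map_add, h₁, h₂, TensorProduct.add_tmul]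
          | tmul x y => simp
      apply (TensorProduct.assoc k C L L).injective
      rw [h1, Coalgebra.coassoc_apply, map_zero, sub_eq_zero]
      have h2 : ∀ Z : L ⊗[k] L, TensorProduct.map π.toLinearMap LinearMap.id
          ((Coalgebra.comul (R := k)).lTensor L Z) =
          (Coalgebra.comul (R := k)).lTensor C
            (TensorProduct.map π.toLinearMap LinearMap.id Z) := by
        intro Z
        induction Z using TensorProduct.induction_on with
        | zero => simp
        | add X₁ X₂ h₁ h₂ => simp only [map_add, h₁, h₂]
        | tmul x y => simp
      rw [h2, (mem d).1 hd, LinearMap.lTensor_tmul]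
    obtain ⟨w, hw⟩ := (hex2 _).1 h0
    rw [← hw]
    clear hw
    induction w using TensorProduct.induction_on with
    | zero => simp
    | add X₁ X₂ h₁ h₂ => rw [map_add]; exact Submodule.add_mem _ h₁ h₂
    | tmul x y => exact Submodule.subset_span ⟨x, (hf x).1 x.2, y, rfl⟩
end

section
/- Let L be a bialgebra over a field k, let C be a k-coalgebra equipped with a left L-module structure, and let π : L → C be a surjective k-linear map which is a coalgebra homomorphism and is left L-linear in the sense that π(x*y) = x • π(y) for all x, y ∈ L (L acting on itself by left multiplication). Define D := {d ∈ L | (π ⊗ id)(Δ_L(d)) = π(1) ⊗ d} and D⁺ := {d ∈ D | ε_L(d) = 0}. Then D⁺ ⊆ ker π, and for every d ∈ D the element Δ_L(d) − 1 ⊗ d of L ⊗ L lies in the image of D⁺ ⊗ L in L ⊗ L. -/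
open TensorProduct

/-- Let `L` be a bialgebra over a field `k`, `C` a `k`-coalgebra with a left
`L`-module structure, and `π : L → C` a surjective `k`-linear coalgebra homomorphism which
is left `L`-linear in the sense that `π (x * y) = x • π y`.  Let
`D = {d ∈ L | (π ⊗ id)(Δ d) = π 1 ⊗ d}` and `D⁺ = {d ∈ D | ε d = 0}`.  Then
`D⁺ ⊆ ker π`, and for every `d ∈ D` the element `Δ d - 1 ⊗ d` of `L ⊗ L` lies in the
image of `D⁺ ⊗ L` in `L ⊗ L`. -/
theorem stmt7 {k L C : Type*} [Field k] [Ring L] [Bialgebra k L]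
    [AddCommGroup C] [Module k C] [Coalgebra k C] [Module L C]
    (π : L →ₗc[k] C) (hsurj : Function.Surjective π)
    (hlin : ∀ x y : L, π (x * y) = x • π y) :
    (∀ d ∈ coactionInvariants π, Coalgebra.counit (R := k) d = 0 → π d = 0) ∧
    (∀ d ∈ coactionInvariants π,
      Coalgebra.comul (R := k) d - (1 : L) ⊗ₜ[k] d ∈ Submodule.span k
        {t : L ⊗[k] L | ∃ a ∈ coactionInvariants π,
          Coalgebra.counit (R := k) a = 0 ∧ ∃ y : L, t = a ⊗ₜ[k] y}) := by
  have hc : ∀ x : L, Coalgebra.counit (R := k) (π x) = Coalgebra.counit (R := k) x := fun x =>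
    CoalgHomClass.counit_comp_apply π x
  constructor
  · intro d hd h0
    have h1 : TensorProduct.map π.toLinearMap LinearMap.id
      (Coalgebra.comul (R := k) d) = π 1 ⊗ₜ[k] d := hd
    have h2 := congrArg (TensorProduct.rid k C ∘ (Coalgebra.counit (R := k) (A := L)).lTensor C) h1
    have h3 : ∀ t : L ⊗[k] L, (Coalgebra.counit (R := k) (A := L)).lTensor C
        (TensorProduct.map π.toLinearMap LinearMap.id t) =
        TensorProduct.map π.toLinearMap LinearMap.id
          ((Coalgebra.counit (R := k) (A := L)).lTensor L t) := by
      intro t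
      induction t with
      | zero => simp
      | tmul x y => simp
      | add x y hx hy => simp only [map_add, hx, hy]
    simp only [Function.comp_apply, h3, Coalgebra.lTensor_counit_comul] at h2
    simpa [h0] using h2
  · intro d hd
    have h1 : TensorProduct.map π.toLinearMap LinearMap.id
      (Coalgebra.comul (R := k) d) = π 1 ⊗ₜ[k] d := hd
    let g : L →ₗ[k] C ⊗[k] L := TensorProduct.mk k C L (π 1)
    let ρ : L →ₗ[k] C ⊗[k] L :=
      (TensorProduct.map π.toLinearMap LinearMap.id) ∘ₗ Coalgebra.comul (R := k)
    let f : L →ₗ[k] C ⊗[k] L := ρ - g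
    have hker : ∀ a, a ∈ LinearMap.ker f ↔ a ∈ coactionInvariants π := by
      intro a
      rw [LinearMap.mem_ker, LinearMap.sub_apply, sub_eq_zero]
      rfl
    have hA : ∀ t : L ⊗[k] L, TensorProduct.assoc k C L L
        ((TensorProduct.map π.toLinearMap LinearMap.id).rTensor L
          ((TensorProduct.assoc k L L L).symm ((Coalgebra.comul (R := k)).lTensor L t))) =
        (Coalgebra.comul (R := k)).lTensor C
          (TensorProduct.map π.toLinearMap LinearMap.id t) := by
      have hB : ∀ s : L ⊗[k] (L ⊗[k] L), TensorProduct.assoc k C L L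
        ((TensorProduct.map π.toLinearMap LinearMap.id).rTensor L
          ((TensorProduct.assoc k L L L).symm s)) =
          TensorProduct.map π.toLinearMap LinearMap.id s := by
        intro s
        induction s with
        | zero => simp
        | add x y hx hy => simp only [map_add, hx, hy]
        | tmul x y =>
          induction y with
          | zero => simp
          | add u v hu hv => simp only [map_add, TensorProduct.tmul_add, hu, hv]
          | tmul u v => simp
      intro t
      rw [hB]
      induction t with
      | zero => simp
      | tmul x y => simp
      | add x y hx hy => simp only [map_add, hx, hy]
    have hG : ∀ t : L ⊗[k] L, TensorProduct.assoc k C L L (g.rTensor L t) = π 1 ⊗ₜ[k] t := by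
      intro t
      induction t with
      | zero => simp
      | tmul x y => simp [g]
      | add x y hx hy => simp only [map_add, hx, hy, TensorProduct.tmul_add]
    have hz : f.rTensor L (Coalgebra.comul (R := k) d) = 0 := by
      apply (TensorProduct.assoc k C L L).injective
      rw [LinearMap.rTensor_sub, LinearMap.sub_apply, map_sub, hG, LinearMap.rTensor_comp_apply,
        ← Coalgebra.coassoc_symm_apply, hA, h1]
      simp
    have hex := Module.Flat.rTensor_exact L (LinearMap.exact_subtype_ker_map f)
    obtain ⟨w, hw⟩ := (hex _).1 hz
    let p : L →ₗ[k] L := LinearMap.id - (Algebra.linearMap k L) ∘ₗ Coalgebra.counit (R := k)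
    have hp : Coalgebra.comul (R := k) d - (1 : L) ⊗ₜ[k] d
        = p.rTensor L (Coalgebra.comul (R := k) d) := by
      rw [LinearMap.rTensor_sub, LinearMap.sub_apply, LinearMap.rTensor_comp_apply,
        Coalgebra.rTensor_counit_comul]
      simp
    have h1D : (1 : L) ∈ LinearMap.ker f := by
      rw [hker]
      simp [coactionInvariants, Algebra.TensorProduct.one_def]
    rw [hp, ← hw]
    clear hw
    induction w with
    | zero => simp
    | add x y hx hy => simpa only [map_add] using Submodule.add_mem _ hx hy
    | tmul x y =>
      refine Submodule.subset_span ⟨p x, ?_, ?_, y, ?_⟩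
      · rw [← hker]
        have : p x = (x : L) - Coalgebra.counit (R := k) (x : L) • (1 : L) := by
          simp [p, Algebra.algebraMap_eq_smul_one]
        rw [this]
        exact Submodule.sub_mem _ x.2 (Submodule.smul_mem _ _ h1D)
      · simp [p]
      · simp
end

section
/- Let k be a field, ι an additive group, and A an associative unital k-algebra equipped with a strong ι-grading 𝒜 : ι → Submodule k A (so A decomposes as the internal direct sum of the 𝒜 i, multiplication respects degrees, and 𝒜 i * 𝒜 j = 𝒜 (i+j) for all i, j ∈ ι). Fix γ ∈ ι, n ∈ ℕ, and elements e₁,…,eₙ ∈ 𝒜 γ. Then (e₁,…,eₙ) is a basis of 𝒜 γ as a left module over the degree-zero subalgebra 𝒜 0 — i.e., every a ∈ 𝒜 γ can be written as a = Σᵢ bᵢ * eᵢ with bᵢ ∈ 𝒜 0, and such a representation is unique — if and only if there exist elements f₁,…,fₙ ∈ 𝒜 (−γ) such that eⱼ * fᵢ = δ_{ij}·1 for all i, j ∈ {1,…,n} and Σᵢ fᵢ * eᵢ = 1. -/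
/-- Let `k` be a field, `ι` an additive group, and `A` a `k`-algebra with a
strong `ι`-grading `𝒜` (so `𝒜 i * 𝒜 j = 𝒜 (i + j)` for all `i, j`).  Fix `γ ∈ ι`,
`n ∈ ℕ` and `e₁, …, eₙ ∈ 𝒜 γ`.  Then `(e₁, …, eₙ)` is a basis of `𝒜 γ` as a left module
over the degree-zero part `𝒜 0` — every `a ∈ 𝒜 γ` is uniquely `∑ᵢ bᵢ * eᵢ` with
`bᵢ ∈ 𝒜 0` — if and only if there exist `f₁, …, fₙ ∈ 𝒜 (-γ)` with `eⱼ * fᵢ = δᵢⱼ · 1`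
and `∑ᵢ fᵢ * eᵢ = 1`. -/
theorem stmt8 {k ι A : Type*} [Field k] [AddGroup ι] [DecidableEq ι]
    [Ring A] [Algebra k A] (𝒜 : ι → Submodule k A) [GradedAlgebra 𝒜]
    (hstrong : ∀ i j : ι, 𝒜 i * 𝒜 j = 𝒜 (i + j))
    (γ : ι) (n : ℕ) (e : Fin n → A) (he : ∀ i, e i ∈ 𝒜 γ) :
    ((∀ a ∈ 𝒜 γ, ∃ b : Fin n → A, (∀ i, b i ∈ 𝒜 0) ∧ a = ∑ i, b i * e i) ∧
      (∀ b b' : Fin n → A, (∀ i, b i ∈ 𝒜 0) → (∀ i, b' i ∈ 𝒜 0) →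
        ∑ i, b i * e i = ∑ i, b' i * e i → b = b')) ↔
    (∃ f : Fin n → A, (∀ i, f i ∈ 𝒜 (-γ)) ∧
      (∀ i j, e j * f i = if i = j then 1 else 0) ∧ (∑ i, f i * e i = 1)) := by
  have hmul : ∀ {i j l : ι} {a b : A}, a ∈ 𝒜 i → b ∈ 𝒜 j → i + j = l → a * b ∈ 𝒜 l := by
    intro i j l a b ha hb h
    rw [← h, ← hstrong i j]
    exact Submodule.mul_mem_mul ha hb
  have h1 : (1 : A) ∈ 𝒜 0 := SetLike.GradedOne.one_mem
  constructor
  · rintro ⟨hex, huniq⟩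
    have key : ∀ x ∈ 𝒜 (-γ) * 𝒜 γ,
        ∃ f : Fin n → A, (∀ i, f i ∈ 𝒜 (-γ)) ∧ ∑ i, f i * e i = x := by
      intro x hx
      induction hx using Submodule.mul_induction_on' with
      | mem_mul_mem u hu v hv =>
        obtain ⟨b, hb, rfl⟩ := hex v hv
        refine ⟨fun i => u * b i, fun i => hmul hu (hb i) (add_zero _), ?_⟩
        simp [Finset.mul_sum, mul_assoc]
      | add x _ y _ hx hy =>
        obtain ⟨f, hf, rfl⟩ := hx
        obtain ⟨g, hg, rfl⟩ := hy
        refine ⟨fun i => f i + g i, fun i => add_mem (hf i) (hg i), ?_⟩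
        simp [add_mul, Finset.sum_add_distrib]
    obtain ⟨f, hf, hs⟩ := key 1 (by rw [hstrong, neg_add_cancel]; exact h1)
    refine ⟨f, hf, ?_, hs⟩
    intro i j
    have := huniq (fun i => e j * f i) (fun i => if i = j then 1 else 0)
      (fun i => hmul (he j) (hf i) (add_neg_cancel γ))
      (fun i => by
        split_ifs
        · exact h1
        · exact zero_mem _)
      (by simp [mul_assoc, ← Finset.mul_sum, hs])
    exact congrFun this i
  · rintro ⟨f, hf, hd, hs⟩
    refine ⟨fun a ha => ⟨fun i => a * f i, fun i => hmul ha (hf i) (add_neg_cancel γ), ?_⟩, ?_⟩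
    · simp [mul_assoc, ← Finset.mul_sum, hs]
    · intro b b' _ _ h
      funext i
      have := congrArg (· * f i) h
      simpa [Finset.sum_mul, mul_assoc, hd] using this
end

section
/- Let k be a field, ι an additive group, and A an associative unital k-algebra equipped with a strong ι-grading 𝒜 : ι → Submodule k A (𝒜 i * 𝒜 j = 𝒜 (i+j) for all i, j). Suppose in addition that there exists a k-algebra homomorphism (character) χ : A → k. Then for each γ ∈ ι, the degree-γ component 𝒜 γ is free as a left module over the degree-zero subalgebra 𝒜 0 — i.e., there exist n ∈ ℕ and e₁,…,eₙ ∈ 𝒜 γ such that every a ∈ 𝒜 γ is uniquely of the form Σᵢ bᵢ * eᵢ with bᵢ ∈ 𝒜 0 — if and only if there exist x ∈ 𝒜 γ and y ∈ 𝒜 (−γ) with x * y = 1 and y * x = 1. -/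
/-- Let `k` be a field, `ι` an additive group, and `A` a `k`-algebra with a
strong `ι`-grading `𝒜` (`𝒜 i * 𝒜 j = 𝒜 (i + j)` for all `i, j`), and suppose there is a
`k`-algebra character `χ : A → k`.  Then for each `γ ∈ ι` the component `𝒜 γ` is free as
a left module over the degree-zero part `𝒜 0` — there are `n` and `e₁, …, eₙ ∈ 𝒜 γ`
such that every `a ∈ 𝒜 γ` is uniquely `∑ᵢ bᵢ * eᵢ` with `bᵢ ∈ 𝒜 0` — if and only if
there exist `x ∈ 𝒜 γ` and `y ∈ 𝒜 (-γ)` with `x * y = 1` and `y * x = 1`. -/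
theorem stmt9 {k ι A : Type*} [Field k] [AddGroup ι] [DecidableEq ι]
    [Ring A] [Algebra k A] (𝒜 : ι → Submodule k A) [GradedAlgebra 𝒜]
    (hstrong : ∀ i j : ι, 𝒜 i * 𝒜 j = 𝒜 (i + j))
    (χ : A →ₐ[k] k) (γ : ι) :
    (∃ n : ℕ, ∃ e : Fin n → A, (∀ i, e i ∈ 𝒜 γ) ∧
      (∀ a ∈ 𝒜 γ, ∃ b : Fin n → A, (∀ i, b i ∈ 𝒜 0) ∧ a = ∑ i, b i * e i) ∧
      (∀ b b' : Fin n → A, (∀ i, b i ∈ 𝒜 0) → (∀ i, b' i ∈ 𝒜 0) →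
        ∑ i, b i * e i = ∑ i, b' i * e i → b = b')) ↔
    (∃ x ∈ 𝒜 γ, ∃ y ∈ 𝒜 (-γ), x * y = 1 ∧ y * x = 1) := by
  have hmul : ∀ {i j l : ι} {a b : A}, a ∈ 𝒜 i → b ∈ 𝒜 j → i + j = l → a * b ∈ 𝒜 l := by
    intro i j l a b ha hb h
    rw [← h, ← hstrong]
    exact Submodule.mul_mem_mul ha hb
  have h1 : (1 : A) ∈ 𝒜 0 := SetLike.GradedOne.one_mem
  constructor
  · rintro ⟨n, e, he, hspan, huniq⟩
    have key : ∀ z ∈ 𝒜 (-γ) * 𝒜 γ, ∃ y : Fin n → A, (∀ i, y i ∈ 𝒜 (-γ)) ∧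
        z = ∑ i, y i * e i := by
      intro z hz
      induction hz using Submodule.mul_induction_on' with
      | mem_mul_mem u hu v hv =>
        obtain ⟨b, hb, rfl⟩ := hspan v hv
        refine ⟨fun i => u * b i, fun i => hmul hu (hb i) (add_zero _), ?_⟩
        simp [Finset.mul_sum, mul_assoc]
      | add z hz w hw ihz ihw =>
        obtain ⟨y, hy, h⟩ := ihz
        obtain ⟨y', hy', h'⟩ := ihw
        refine ⟨fun i => y i + y' i, fun i => add_mem (hy i) (hy' i), ?_⟩
        simp [add_mul, Finset.sum_add_distrib, ← h, ← h']
    obtain ⟨y, hy, hye⟩ := key 1 (by rw [hstrong, neg_add_cancel]; exact h1)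
    have hdual : ∀ j i, e j * y i = if i = j then 1 else 0 := by
      intro j i
      have := huniq (fun i => e j * y i) (fun i => if i = j then 1 else 0)
        (fun i => hmul (he j) (hy i) (add_neg_cancel γ))
        (fun i => by
          split_ifs
          · exact h1
          · exact zero_mem _)
        (by
          simp only [mul_assoc, ← Finset.mul_sum, ← hye]
          simp)
      exact congrFun this i
    have hchi : ∀ j i, χ (e j) * χ (y i) = if i = j then 1 else 0 := by
      intro j i
      rw [← map_mul, hdual]
      split_ifs <;> simp
    have hsub : ∀ i j : Fin n, i = j := by
      intro i j
      by_contra hij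
      have a := hchi i i
      have b := hchi j j
      have c := hchi j i
      simp only [if_true, if_neg hij] at a b c
      rcases mul_eq_zero.1 c with h | h
      · simp [h] at b
      · simp [h] at a
    have hn : ∃ i : Fin n, True := by
      by_contra hne
      have hE : IsEmpty (Fin n) := ⟨fun i => hne ⟨i, trivial⟩⟩
      have := congrArg χ hye
      simp at this
    obtain ⟨i, -⟩ := hn
    refine ⟨e i, he i, y i, hy i, by simpa using hdual i i, ?_⟩
    rw [hye]
    symm
    exact Finset.sum_eq_single i (fun j _ hj => absurd (hsub j i) hj) (by simp)
  · rintro ⟨x, hx, y, hy, hxy, hyx⟩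
    refine ⟨1, fun _ => x, fun _ => hx, ?_, ?_⟩
    · intro a ha
      refine ⟨fun _ => a * y, fun _ => hmul ha hy (add_neg_cancel γ), ?_⟩
      simp [mul_assoc, hyx]
    · intro b b' _ _ h
      funext i
      have h2 := congrArg (· * y) h
      simp [mul_assoc, hxy] at h2
      rw [Subsingleton.elim i 0, h2]
end

section
/- Let R be a ring, N a positive natural number, and I : Fin N → Ideal R a family of two-sided ideals such that (1) ⋂ᵢ I i = 0, and (2) the sublattice of the ideal lattice of R generated by {I 0,…,I (N−1)} under sums and intersections is distributive, i.e., J ∩ (K + L) = J ∩ K + J ∩ L for all J, K, L in the closure of {I i} under finite sums and intersections. For i, j let πᶦⱼ : R/I i → R/(I i + I j) denote the canonical quotient-of-quotient maps. Then the canonical ring homomorphism χ : R → Π_{i} R/I i, r ↦ (r mod I i)ᵢ, is injective and its range is exactly the multipullback {(xᵢ)ᵢ ∈ Πᵢ R/I i | πᶦⱼ(xᵢ) = πʲᵢ(xⱼ) for all i, j}; in particular χ is a ring isomorphism onto this subring. -/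
/-- The canonical factor ("quotient of quotient") map `R/I → R/J` for two-sided ideals
`I ≤ J`. -/
def TwoSidedIdeal.factor {R : Type*} [Ring R] (I J : TwoSidedIdeal R) (h : I ≤ J) :
    I.ringCon.Quotient → J.ringCon.Quotient :=
  Quotient.map' id fun a b hab => (J.rel_iff a b).2 (h ((I.rel_iff a b).1 hab))

/-- The sublattice of the ideal lattice of `R` generated by the family `I` under joins
(sums) and meets (intersections): the smallest collection of two-sided ideals containing
all the `I i` and closed under `⊔` and `⊓`. -/
def latticeGen {R : Type*} [Ring R] {N : ℕ} (I : Fin N → TwoSidedIdeal R) :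
    Set (TwoSidedIdeal R) :=
  ⋂₀ {S : Set (TwoSidedIdeal R) | Set.range I ⊆ S ∧
      (∀ a ∈ S, ∀ b ∈ S, a ⊔ b ∈ S) ∧ (∀ a ∈ S, ∀ b ∈ S, a ⊓ b ∈ S)}

theorem latticeGen_base {R : Type*} [Ring R] {N : ℕ} (I : Fin N → TwoSidedIdeal R) (i : Fin N) :
    I i ∈ latticeGen I := fun _ hS => hS.1 ⟨i, rfl⟩

theorem latticeGen_sup {R : Type*} [Ring R] {N : ℕ} {I : Fin N → TwoSidedIdeal R}
    {a b : TwoSidedIdeal R} (ha : a ∈ latticeGen I) (hb : b ∈ latticeGen I) :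
    a ⊔ b ∈ latticeGen I := fun S hS => hS.2.1 a (ha S hS) b (hb S hS)

theorem latticeGen_inf {R : Type*} [Ring R] {N : ℕ} {I : Fin N → TwoSidedIdeal R}
    {a b : TwoSidedIdeal R} (ha : a ∈ latticeGen I) (hb : b ∈ latticeGen I) :
    a ⊓ b ∈ latticeGen I := fun S hS => hS.2.2 a (ha S hS) b (hb S hS)

theorem crt_inf {R : Type*} [Ring R] {N : ℕ} (I : Fin N → TwoSidedIdeal R)
    (h2 : ∀ J K L : TwoSidedIdeal R, J ∈ latticeGen I → K ∈ latticeGen I →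
      L ∈ latticeGen I → J ⊓ (K ⊔ L) = (J ⊓ K) ⊔ (J ⊓ L)) (j : Fin N)
    (s : Finset (Fin N)) (hs : s.Nonempty) :
    ∃ M ∈ latticeGen I, (∀ i ∈ s, M ≤ I i) ∧
      ∀ x, (∀ i ∈ s, x ∈ I i ⊔ I j) → x ∈ M ⊔ I j := by
  induction hs using Finset.Nonempty.cons_induction with
  | singleton a => exact ⟨I a, latticeGen_base I a, by simp, by simp⟩
  | cons a s ha hs ih =>
    obtain ⟨M, hM, hle, hx⟩ := ih
    have hb := latticeGen_base I
    refine ⟨I a ⊓ M, latticeGen_inf (hb a) hM, ?_, ?_⟩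
    · intro i hi
      rcases Finset.mem_cons.1 hi with rfl | hi
      · exact inf_le_left
      · exact inf_le_right.trans (hle i hi)
    · intro x h
      have e : (M ⊔ I j) ⊓ (I a ⊔ I j) ≤ (I a ⊓ M) ⊔ I j := by
        rw [h2 _ _ _ (latticeGen_sup hM (hb j)) (hb a) (hb j), inf_comm (M ⊔ I j) (I a),
          h2 _ _ _ (hb a) hM (hb j)]
        exact sup_le (sup_le_sup_left inf_le_right _) (inf_le_right.trans le_sup_right)
      apply e
      rw [TwoSidedIdeal.mem_inf]
      exact ⟨hx x fun i hi => h i (Finset.mem_cons_of_mem hi), h a (Finset.mem_cons_self a s)⟩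

theorem crt_exists {R : Type*} [Ring R] {N : ℕ} (I : Fin N → TwoSidedIdeal R)
    (h2 : ∀ J K L : TwoSidedIdeal R, J ∈ latticeGen I → K ∈ latticeGen I →
      L ∈ latticeGen I → J ⊓ (K ⊔ L) = (J ⊓ K) ⊔ (J ⊓ L))
    (a : Fin N → R) (h : ∀ i j, a i - a j ∈ I i ⊔ I j)
    (s : Finset (Fin N)) (hs : s.Nonempty) : ∃ r, ∀ i ∈ s, r - a i ∈ I i := by
  induction hs using Finset.Nonempty.cons_induction with
  | singleton j => exact ⟨a j, by simp [TwoSidedIdeal.zero_mem]⟩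
  | cons j s hj hs ih =>
    obtain ⟨r, hr⟩ := ih
    obtain ⟨M, hM, hle, hx⟩ := crt_inf I h2 j s hs
    have hm : r - a j ∈ M ⊔ I j := by
      apply hx
      intro i hi
      have := TwoSidedIdeal.add_mem _ ((le_sup_left : I i ≤ I i ⊔ I j) (hr i hi)) (h i j)
      simpa using this
    obtain ⟨m, hm, n, hn, e⟩ := TwoSidedIdeal.mem_sup.1 hm
    refine ⟨r - m, fun i hi => ?_⟩
    rcases Finset.mem_cons.1 hi with rfl | hi
    · have : r - m - a i = n := by
        rw [sub_right_comm, ← e]; abel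
      rwa [this]
    · rw [sub_right_comm]
      exact TwoSidedIdeal.sub_mem _ (hr i hi) (hle i hi hm)

/-- Let `R` be a ring, `N > 0`, and `I : Fin N → TwoSidedIdeal R` a family
of two-sided ideals with (1) `⋂ᵢ I i = 0` and (2) the sublattice of ideals generated by
the `I i` under sums and intersections distributive.  Then the canonical ring
homomorphism `χ : R → Π i, R/(I i)` is injective and its range is exactly the
multipullback `{(xᵢ)ᵢ | πᶦⱼ (xᵢ) = πʲᵢ (xⱼ) for all i, j}`, where
`πᶦⱼ : R/(I i) → R/(I i + I j)` are the canonical factor maps; in particular `χ` is a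
ring isomorphism onto this subring. -/
theorem stmt10 {R : Type*} [Ring R] (N : ℕ) (hN : 0 < N) (I : Fin N → TwoSidedIdeal R)
    (h1 : ∀ r : R, (∀ i, r ∈ I i) → r = 0)
    (h2 : ∀ J K L : TwoSidedIdeal R, J ∈ latticeGen I → K ∈ latticeGen I →
      L ∈ latticeGen I → J ⊓ (K ⊔ L) = (J ⊓ K) ⊔ (J ⊓ L)) :
    Function.Injective (Pi.ringHom fun i : Fin N => (I i).ringCon.mk') ∧
    Set.range (Pi.ringHom fun i : Fin N => (I i).ringCon.mk') =
      {x : ∀ i : Fin N, (I i).ringCon.Quotient | ∀ i j : Fin N,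
        TwoSidedIdeal.factor (I i) (I i ⊔ I j) le_sup_left (x i) =
        TwoSidedIdeal.factor (I j) (I i ⊔ I j) le_sup_right (x j)} := by
  constructor
  · intro x y hxy
    rw [← sub_eq_zero]
    apply h1
    intro i
    exact ((I i).rel_iff x y).1 ((RingCon.eq _).1 (congrFun hxy i))
  · ext x
    constructor
    · rintro ⟨r, rfl⟩ i j
      rfl
    · intro hx
      choose a ha using fun i => Quotient.exists_rep (x i)
      have h : ∀ i j, a i - a j ∈ I i ⊔ I j := by
        intro i j
        have := hx i j
        rw [← ha i, ← ha j] at this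
        exact ((I i ⊔ I j).rel_iff _ _).1 ((RingCon.eq _).1 this)
      obtain ⟨r, hr⟩ := crt_exists I h2 a h Finset.univ ⟨⟨0, hN⟩, Finset.mem_univ _⟩
      refine ⟨r, funext fun i => ?_⟩
      rw [← ha i]
      exact (RingCon.eq _).2 (((I i).rel_iff _ _).2 (hr i (Finset.mem_univ i)))
end

section
/- Define δ₁ : ℝ × ℝ → ℂ by δ₁(k,t) := exp(iπ(kt/4 + k/2 + 3/2)) and δ₂ : ℝ × ℝ → ℂ by δ₂(t,k) := exp(iπ(−kt/4 − k/2 + 1)). There exist continuous functions φ₁, φ₂ : S¹ → ℝ on the unit circle S¹ = {z ∈ ℂ : |z| = 1} such that: (a) φ₁(z), φ₂(z) ∈ [−1,1] for all z ∈ S¹; (b) φ₁(−z) = −φ₁(z) and φ₂(−z) = −φ₂(z) for all z ∈ S¹; and (c) for all k ∈ {1,−1} and t ∈ [−1,1]: φ₁(δ₁(k,t)) = k, φ₂(δ₁(k,t)) = t, φ₁(δ₂(t,k)) = t, and φ₂(δ₂(t,k)) = k. -/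
/-- `δ₁(k,t) = exp(iπ(kt/4 + k/2 + 3/2))`. -/
noncomputable def delta1 (k t : ℝ) : ℂ :=
  Complex.exp (Complex.I * (Real.pi : ℂ) *
    ((k : ℂ) * (t : ℂ) / 4 + (k : ℂ) / 2 + 3 / 2))

/-- `δ₂(t,k) = exp(iπ(−kt/4 − k/2 + 1))`. -/
noncomputable def delta2 (t k : ℝ) : ℂ :=
  Complex.exp (Complex.I * (Real.pi : ℂ) *
    (-((k : ℂ) * (t : ℂ)) / 4 - (k : ℂ) / 2 + 1))

noncomputable def cl12 (x : ℝ) : ℝ := max (-1) (min 1 (4 / Real.pi * Real.arcsin x))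

theorem cl12_cont : Continuous cl12 := by
  unfold cl12
  exact continuous_const.max (continuous_const.min
    (continuous_const.mul Real.continuous_arcsin))

theorem cl12_mem (x : ℝ) : cl12 x ∈ Set.Icc (-1 : ℝ) 1 := by
  unfold cl12
  exact ⟨le_max_left _ _, max_le (by norm_num) (min_le_left _ _)⟩

theorem cl12_neg (x : ℝ) : cl12 (-x) = - cl12 x := by
  unfold cl12
  rw [Real.arcsin_neg, mul_neg]
  generalize 4 / Real.pi * Real.arcsin x = y
  grind

theorem cl12_sin (t : ℝ) (ht : t ∈ Set.Icc (-1 : ℝ) 1) :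
    cl12 (Real.sin (t * Real.pi / 4)) = t := by
  obtain ⟨h1, h2⟩ := ht
  have hp := Real.pi_pos
  unfold cl12
  rw [Real.arcsin_sin (by nlinarith) (by nlinarith)]
  have : 4 / Real.pi * (t * Real.pi / 4) = t := by field_simp
  rw [this, min_eq_right h2, max_eq_right h1]

theorem cl12_cos (t : ℝ) (ht : t ∈ Set.Icc (-1 : ℝ) 1) :
    cl12 (Real.cos (t * Real.pi / 4)) = 1 := by
  obtain ⟨h1, h2⟩ := ht
  have hp := Real.pi_pos
  have ha : |t| ≤ 1 := abs_le.2 ⟨h1, h2⟩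
  have ha0 := abs_nonneg t
  have e : Real.cos (t * Real.pi / 4) = Real.sin (Real.pi / 2 - |t| * Real.pi / 4) := by
    rw [Real.sin_pi_div_two_sub]
    rcases abs_choice t with h | h <;> rw [h]
    rw [← Real.cos_neg]; congr 1; ring
  unfold cl12
  rw [e, Real.arcsin_sin (by nlinarith) (by nlinarith)]
  have : 4 / Real.pi * (Real.pi / 2 - |t| * Real.pi / 4) = 2 - |t| := by field_simp; ring
  rw [this, min_eq_left (by linarith)]
  norm_num

theorem exp12 (a : ℝ) (w : ℂ) (h : w = Complex.I * (Real.pi : ℂ) * (a : ℂ)) :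
    (Complex.exp w).re = Real.cos (Real.pi * a) ∧
    (Complex.exp w).im = Real.sin (Real.pi * a) := by
  have : w = ((Real.pi * a : ℝ) : ℂ) * Complex.I := by rw [h]; push_cast; ring
  rw [this]
  exact ⟨Complex.exp_ofReal_mul_I_re _, Complex.exp_ofReal_mul_I_im _⟩

theorem d1_12 (k t : ℝ) (hk : k = 1 ∨ k = -1) :
    (delta1 k t).re = k * Real.cos (t * Real.pi / 4) ∧
    (delta1 k t).im = Real.sin (t * Real.pi / 4) := by
  obtain ⟨h1, h2⟩ := exp12 (k * t / 4 + k / 2 + 3 / 2) _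
    (show Complex.I * (Real.pi : ℂ) *
      ((k : ℂ) * (t : ℂ) / 4 + (k : ℂ) / 2 + 3 / 2) = _ by push_cast; rfl)
  unfold delta1
  rw [h1, h2]
  rcases hk with rfl | rfl
  · have : Real.pi * (1 * t / 4 + 1 / 2 + 3 / 2) = t * Real.pi / 4 + 2 * Real.pi := by ring
    rw [this, Real.cos_add_two_pi, Real.sin_add_two_pi]; simp
  · have : Real.pi * (-1 * t / 4 + -1 / 2 + 3 / 2) = Real.pi - t * Real.pi / 4 := by ring
    rw [this, Real.cos_pi_sub, Real.sin_pi_sub]; simp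

theorem d2_12 (k t : ℝ) (hk : k = 1 ∨ k = -1) :
    (delta2 t k).re = Real.sin (t * Real.pi / 4) ∧
    (delta2 t k).im = k * Real.cos (t * Real.pi / 4) := by
  obtain ⟨h1, h2⟩ := exp12 (-(k * t) / 4 - k / 2 + 1) _
    (show Complex.I * (Real.pi : ℂ) *
      (-((k : ℂ) * (t : ℂ)) / 4 - (k : ℂ) / 2 + 1) = _ by push_cast; rfl)
  unfold delta2
  rw [h1, h2]
  rcases hk with rfl | rfl
  · have : Real.pi * (-(1 * t) / 4 - 1 / 2 + 1) = Real.pi / 2 - t * Real.pi / 4 := by ring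
    rw [this, Real.cos_pi_div_two_sub, Real.sin_pi_div_two_sub]; simp
  · have : Real.pi * (-(-1 * t) / 4 - -1 / 2 + 1)
        = (t * Real.pi / 4 + Real.pi / 2) + Real.pi := by ring
    rw [this, Real.cos_add_pi, Real.sin_add_pi, Real.cos_add_pi_div_two,
      Real.sin_add_pi_div_two]; simp

theorem kcos12 (k t : ℝ) (hk : k = 1 ∨ k = -1) (ht : t ∈ Set.Icc (-1 : ℝ) 1) :
    cl12 (k * Real.cos (t * Real.pi / 4)) = k := by
  rcases hk with rfl | rfl
  · rw [one_mul, cl12_cos t ht]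
  · rw [neg_one_mul, cl12_neg, cl12_cos t ht]

/-- There exist continuous functions `φ₁, φ₂ : S¹ → ℝ` on the unit circle
`S¹ = {z ∈ ℂ : |z| = 1}` such that: (a) they take values in `[-1,1]`;
(b) `φᵢ(-z) = -φᵢ(z)`; and (c) for all `k ∈ {1,-1}` and `t ∈ [-1,1]`:
`φ₁(δ₁(k,t)) = k`, `φ₂(δ₁(k,t)) = t`, `φ₁(δ₂(t,k)) = t` and `φ₂(δ₂(t,k)) = k`. -/
theorem stmt12 :
    ∃ φ₁ φ₂ : ↥(Metric.sphere (0 : ℂ) 1) → ℝ,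
      Continuous φ₁ ∧ Continuous φ₂ ∧
      (∀ z : ↥(Metric.sphere (0 : ℂ) 1),
        φ₁ z ∈ Set.Icc (-1 : ℝ) 1 ∧ φ₂ z ∈ Set.Icc (-1 : ℝ) 1) ∧
      (∀ z w : ↥(Metric.sphere (0 : ℂ) 1), (w : ℂ) = -(z : ℂ) →
        φ₁ w = -φ₁ z ∧ φ₂ w = -φ₂ z) ∧
      (∀ k t : ℝ, (k = 1 ∨ k = -1) → t ∈ Set.Icc (-1 : ℝ) 1 →
        ∀ z : ↥(Metric.sphere (0 : ℂ) 1),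
          ((z : ℂ) = delta1 k t → φ₁ z = k ∧ φ₂ z = t) ∧
          ((z : ℂ) = delta2 t k → φ₁ z = t ∧ φ₂ z = k)) := by
  refine ⟨fun z => cl12 (z : ℂ).re, fun z => cl12 (z : ℂ).im,
    cl12_cont.comp (Complex.continuous_re.comp continuous_subtype_val),
    cl12_cont.comp (Complex.continuous_im.comp continuous_subtype_val),
    fun z => ⟨cl12_mem _, cl12_mem _⟩, ?_, ?_⟩
  · intro z w h
    simp only [h, Complex.neg_re, Complex.neg_im, cl12_neg, and_self]
  · intro k t hk ht z
    refine ⟨fun h => ?_, fun h => ?_⟩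
    · simp only [h, (d1_12 k t hk).1, (d1_12 k t hk).2]
      exact ⟨kcos12 k t hk ht, cl12_sin t ht⟩
    · simp only [h, (d2_12 k t hk).1, (d2_12 k t hk).2]
      exact ⟨cl12_sin t ht, kcos12 k t hk ht⟩
end

section
/- Define δ₁ : ℝ × ℝ → ℂ by δ₁(k,t) := exp(iπ(kt/4 + k/2 + 3/2)) and δ₂ : ℝ × ℝ → ℂ by δ₂(t,k) := exp(iπ(−kt/4 − k/2 + 1)), and let S¹ = {z ∈ ℂ : |z| = 1} be the unit circle with its subspace topology. Let g₊, g₋ : [−1,1] → ℂ be continuous functions. Then there exists a continuous function f : S¹ → ℂ such that f(δ₂(t,k)) = 0 for all t ∈ [−1,1] and k ∈ {1,−1}, and f(δ₁(1,t)) = g₊(t) and f(δ₁(−1,t)) = g₋(t) for all t ∈ [−1,1], if and only if g₊(1) = g₊(−1) = g₋(1) = g₋(−1) = 0. -/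
open Real in
lemma d1_eq (k t : ℝ) : delta1 k t = Complex.exp (((π * (k*t/4+k/2+3/2) : ℝ) : ℂ) * Complex.I) := by
  unfold delta1; congr 1; push_cast; ring

open Real in
lemma d2_eq (t k : ℝ) : delta2 t k = Complex.exp (((π * (-(k*t)/4-k/2+1) : ℝ) : ℂ) * Complex.I) := by
  unfold delta2; congr 1; push_cast; ring

lemma d1_mem (k t : ℝ) : delta1 k t ∈ Metric.sphere (0:ℂ) 1 := by
  rw [d1_eq, mem_sphere_zero_iff_norm, Complex.norm_exp_ofReal_mul_I]

open Real in
lemma d1_im (t : ℝ) : (delta1 1 t).im = sin (π * t / 4) := by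
  rw [d1_eq, Complex.exp_ofReal_mul_I_im, ← Real.sin_add_two_pi (π * t / 4)]
  congr 1; ring

open Real in
lemma d1_re (t : ℝ) : (delta1 1 t).re = cos (π * t / 4) := by
  rw [d1_eq, Complex.exp_ofReal_mul_I_re, ← Real.cos_add_two_pi (π * t / 4)]
  congr 1; ring

open Real in
lemma d1m_im (t : ℝ) : (delta1 (-1) t).im = sin (π * t / 4) := by
  rw [d1_eq, Complex.exp_ofReal_mul_I_im, ← Real.sin_pi_sub (π * t / 4)]
  congr 1; ring

open Real in
lemma d1m_re (t : ℝ) : (delta1 (-1) t).re = -cos (π * t / 4) := by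
  rw [d1_eq, Complex.exp_ofReal_mul_I_re, ← Real.cos_pi_sub (π * t / 4)]
  congr 1; ring

open Real in
lemma d2_im (t : ℝ) : (delta2 t 1).im = cos (π * t / 4) := by
  rw [d2_eq, Complex.exp_ofReal_mul_I_im, ← Real.sin_pi_div_two_sub (π * t / 4)]
  congr 1; ring

open Real in
lemma d2m_im (t : ℝ) : (delta2 t (-1)).im = -cos (π * t / 4) := by
  rw [d2_eq, Complex.exp_ofReal_mul_I_im, ← Real.sin_pi_div_two_sub (π * t / 4), ← Real.sin_add_pi,
    ← Real.sin_pi_sub, ← Real.sin_add_two_pi]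
  congr 1; ring

open Real in
lemma cos_ge (t : ℝ) (ht : t ∈ Set.Icc (-1:ℝ) 1) : sin (π/4) ≤ cos (π * t / 4) := by
  rw [sin_pi_div_four, ← cos_pi_div_four, ← cos_abs (π * t / 4)]
  have hp := pi_pos
  have : |π * t / 4| ≤ π/4 := by
    rw [abs_le]; constructor <;> nlinarith [ht.1, ht.2]
  exact cos_le_cos_of_nonneg_of_le_pi (abs_nonneg _) (by linarith) this

open Real in
lemma arc_ge (x : ℝ) (h : sin (π/4) ≤ x) : 1 ≤ 4/π * arcsin x := by
  have hp := pi_pos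
  have h1 : π/4 ≤ arcsin x := by
    rw [← arcsin_sin (x := π/4) (by linarith) (by linarith)]
    exact monotone_arcsin h
  calc (1:ℝ) = 4/π * (π/4) := by field_simp
    _ ≤ _ := by gcongr

/-- the arc parameter -/
noncomputable def TT (x : ℝ) : ↥(Set.Icc (-1 : ℝ) 1) :=
  Set.projIcc (-1:ℝ) 1 (by norm_num) (4/Real.pi * Real.arcsin x)

lemma TT_cont : Continuous TT :=
  continuous_projIcc.comp (continuous_const.mul Real.continuous_arcsin)

open Real in
lemma TT_top (x : ℝ) (h : sin (π/4) ≤ x) : TT x = ⟨1, by norm_num⟩ :=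
  Set.projIcc_of_right_le _ (arc_ge x h)

open Real in
lemma TT_bot (x : ℝ) (h : sin (π/4) ≤ x) : TT (-x) = ⟨-1, by norm_num⟩ := by
  refine Set.projIcc_of_le_left _ ?_
  rw [arcsin_neg]
  linarith [arc_ge x h]

open Real in
lemma TT_sin (t : ↥(Set.Icc (-1 : ℝ) 1)) : TT (sin (π * t / 4)) = t := by
  have hp := pi_pos
  unfold TT
  rw [arcsin_sin (by nlinarith [t.2.1]) (by nlinarith [t.2.2])]
  have : 4 / π * (π * (t:ℝ) / 4) = t := by field_simp
  rw [this]
  exact Set.projIcc_val _ t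

/-- Let `g₊, g₋ : [-1,1] → ℂ` be continuous.  There exists a continuous
`f : S¹ → ℂ` with `f(δ₂(t,k)) = 0` for all `t ∈ [-1,1]`, `k ∈ {1,-1}`, and
`f(δ₁(1,t)) = g₊(t)`, `f(δ₁(-1,t)) = g₋(t)` for all `t ∈ [-1,1]`, if and only if
`g₊(1) = g₊(-1) = g₋(1) = g₋(-1) = 0`. -/
theorem stmt14 (gp gm : ↥(Set.Icc (-1 : ℝ) 1) → ℂ)
    (hgp : Continuous gp) (hgm : Continuous gm) :
    (∃ f : ↥(Metric.sphere (0 : ℂ) 1) → ℂ, Continuous f ∧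
      (∀ t k : ℝ, t ∈ Set.Icc (-1 : ℝ) 1 → (k = 1 ∨ k = -1) →
        ∀ z : ↥(Metric.sphere (0 : ℂ) 1), (z : ℂ) = delta2 t k → f z = 0) ∧
      (∀ t : ↥(Set.Icc (-1 : ℝ) 1), ∀ z : ↥(Metric.sphere (0 : ℂ) 1),
        ((z : ℂ) = delta1 1 (t : ℝ) → f z = gp t) ∧
        ((z : ℂ) = delta1 (-1) (t : ℝ) → f z = gm t))) ↔
    (gp ⟨1, by norm_num⟩ = 0 ∧ gp ⟨-1, by norm_num⟩ = 0 ∧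
      gm ⟨1, by norm_num⟩ = 0 ∧ gm ⟨-1, by norm_num⟩ = 0) := by

  constructor
  · rintro ⟨f, -, h2, h1⟩
    have key : ∀ t : ↥(Set.Icc (-1 : ℝ) 1), ∀ s k : ℝ, s ∈ Set.Icc (-1:ℝ) 1 → (k = 1 ∨ k = -1) →
        (delta1 1 t = delta2 s k → gp t = 0) ∧ (delta1 (-1) t = delta2 s k → gm t = 0) := by
      intro t s k hs hk
      refine ⟨fun h => ?_, fun h => ?_⟩
      · rw [← (h1 t ⟨_, d1_mem 1 t⟩).1 rfl]; exact h2 s k hs hk _ h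
      · rw [← (h1 t ⟨_, d1_mem (-1) t⟩).2 rfl]; exact h2 s k hs hk _ h
    refine ⟨(key _ 1 1 (by norm_num) (by norm_num)).1 ?_, (key _ 1 (-1) (by norm_num) (by norm_num)).1 ?_,
      (key _ (-1) 1 (by norm_num) (by norm_num)).2 ?_, (key _ (-1) (-1) (by norm_num) (by norm_num)).2 ?_⟩
    · unfold delta1 delta2
      rw [← Complex.exp_periodic (Complex.I * _ * (-_ / 4 - _ / 2 + 1))]
      congr 1; push_cast; ring
    all_goals
      unfold delta1 delta2
      congr 1; push_cast; ring
  · rintro ⟨hp1, hp2, hm1, hm2⟩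
    refine ⟨fun z => if 0 ≤ (z:ℂ).re then gp (TT (z:ℂ).im) else gm (TT (z:ℂ).im), ?_, ?_, ?_⟩
    · have him : Continuous fun z : ↥(Metric.sphere (0 : ℂ) 1) => TT (z:ℂ).im :=
        TT_cont.comp (Complex.continuous_im.comp continuous_subtype_val)
      refine Continuous.if_le (hgp.comp him) (hgm.comp him) continuous_const
        (Complex.continuous_re.comp continuous_subtype_val) ?_
      intro z hz
      have hn : ‖(z:ℂ)‖ = 1 := mem_sphere_zero_iff_norm.1 z.2
      have hsq : (z:ℂ).re * (z:ℂ).re + (z:ℂ).im * (z:ℂ).im = 1 := by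
        rw [← Complex.normSq_apply, Complex.normSq_eq_norm_sq, hn]; norm_num
      rw [← hz] at hsq
      have : (z:ℂ).im = 1 ∨ (z:ℂ).im = -1 := by
        apply mul_self_eq_one_iff.1; linarith
      rcases this with h | h
      · simp only [Function.comp, h, TT_top 1 (Real.sin_le_one _), hp1, hm1]
      · simp only [Function.comp, h, TT_bot 1 (Real.sin_le_one _), hp2, hm2]
    · rintro t k ht (rfl | rfl) z hz
      · simp only [hz, d2_im, TT_top _ (cos_ge t ht), hp1, hm1, ite_self]
      · simp only [hz, d2m_im, TT_bot _ (cos_ge t ht), hp2, hm2, ite_self]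
    · intro t z
      have hc : 0 < Real.cos (Real.pi * t / 4) := by
        refine lt_of_lt_of_le ?_ (cos_ge t t.2)
        rw [Real.sin_pi_div_four]; positivity
      refine ⟨fun hz => ?_, fun hz => ?_⟩
      · simp only [hz, d1_re, d1_im, TT_sin, hc.le, if_true]
      · have : ¬ (0 ≤ - Real.cos (Real.pi * t / 4)) := by linarith
        simp only [hz, d1m_re, d1m_im, TT_sin, this, if_false]
end
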